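/- Let 𝒴 be a finite linearly ordered set and let Q, Q' : 𝒴 → (0,1] be strictly positive probability mass functions on 𝒴. Let γ ∈ (0,1) and η ∈ (−1,∞), let (w_k)_{k≥1} be the truncated negative binomial distribution D_{η,γ} with mean m and probability generating function φ, and assume m·γ ≤ 1. Define A(y) = φ(Q(≤y)) − φ(Q(<y)) and A'(y) = φ(Q'(≤y)) − φ(Q'(<y)). Let σ > 0 and let g(x) = (1/(σ√(2π)))·exp(−x²/(2σ²)) be the Gaussian density with standard deviation σ; suppose that for every s ∈ ℝ both ∑_y max(Q(y) − e^s Q'(y), 0) and ∑_y max(Q'(y) − e^s Q(y), 0) are at most ∫_ℝ max(g(x−1) − e^s g(x), 0) dx (i.e., the base mechanism is dominated by the Gaussian mechanism with noise parameter σ and sensitivity 1). Then for every δ ∈ (0,1], with ε = (η+2)·( 1/(2σ²) + (1/σ)·√(2·log(1/(γδ))) ) + (η+1)·δ, one has ∑_{y∈𝒴} max(A(y) − e^{ε}·A'(y), 0) ≤ δ. -/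

import Mathlib

/-!
Write `Φ` for the closed form of the generating function of `D_{η,γ}`. Its derivative is
`Φ'(z) = m (γ / (1 - (1-γ) z)) ^ (η+1)` (`hasDerivAt_negBinGF`), so `0 ≤ Φ' ≤ m` on `[0,1]`, and
writing `1 - (1-γ) z = γ + (1-γ) (1-z)` shows that the ratio of two values of `Φ'` is controlled by
the ratio of the tails `1 - z`.

A Chernoff bound on the Gaussian privacy loss (`gaussian_hockeyStick_le`) shows that `Q` and `Q'`
are `(a, γδ)`-indistinguishable in both directions, where
`a = 1/(2σ²) + (1/σ) √(2 log (1/(γδ)))`. The direction from `Q'` to `Q`, applied to (randomised)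
upper sets, gives `1 - q' ≤ e^a (1 - q) + γδ` for interpolated cumulative masses
`q = Q(<y) + t Q(y)` and `q' = Q'(<y) + t Q'(y)`. The additive error `γδ` is absorbed by the `γ` in
`γ + (1-γ)(1-q)`, and hence `Φ'(q) ≤ e^{(η+1)(a+δ)} Φ'(q')` (`rate_le`).

Along `t ∈ [0,1]` the derivative of `Φ(q(t)) - e^ε Φ(q'(t))` is
`Φ'(q) Q(y) - e^ε Φ'(q') Q'(y) ≤ Φ'(q) (Q(y) - e^a Q'(y)) ≤ m max (Q(y) - e^a Q'(y)) 0`.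
The mean value inequality bounds `A(y) - e^ε A'(y)` by the right-hand side
(`select_sub_le`), and summing over `y` with the direction from `Q` to `Q'` gives `m γ δ ≤ δ`.
-/

open Finset Real

/-- Cumulative mass `Q(≤ y)` of a pmf on a finite linearly ordered set. -/
noncomputable def cumLE {Y : Type*} [Fintype Y] [LinearOrder Y] (Q : Y → ℝ) (y : Y) : ℝ :=
  ∑ z ∈ Finset.univ.filter (fun z => z ≤ y), Q z

/-- Cumulative mass `Q(< y)` of a pmf on a finite linearly ordered set. -/
noncomputable def cumLT {Y : Type*} [Fintype Y] [LinearOrder Y] (Q : Y → ℝ) (y : Y) : ℝ :=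
  ∑ z ∈ Finset.univ.filter (fun z => z < y), Q z

/-- The pmf of the truncated negative binomial distribution `D_{η,γ}` (supported on `k ≥ 1`). -/
noncomputable def negBinPMF (η γ : ℝ) (k : ℕ) : ℝ :=
  if k = 0 then 0
  else if η = 0 then (1 - γ) ^ k / (k * Real.log (1 / γ))
  else (1 - γ) ^ k / (γ ^ (-η) - 1) * ∏ i ∈ Finset.range k, ((i + η) / (i + 1))

/-- The mean of the truncated negative binomial distribution `D_{η,γ}`. -/
noncomputable def negBinMean (η γ : ℝ) : ℝ :=
  if η = 0 then (1 / γ - 1) / Real.log (1 / γ)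
  else η * (1 - γ) / (γ * (1 - γ ^ η))

/-- The probability generating function of a distribution `w` on ℕ. -/
noncomputable def pgf (w : ℕ → ℝ) (z : ℝ) : ℝ := ∑' k : ℕ, w k * z ^ k

/-! ### The generating function -/

/-- Closed form of the probability generating function of `D_{η,γ}`; the case `η = 0` is separate
because the generic formula degenerates to `0 / 0` there. -/
noncomputable def negBinGF (η γ z : ℝ) : ℝ :=
  if η = 0 then Real.log (1 - (1 - γ) * z) / Real.log γ
  else ((1 - (1 - γ) * z) ^ (-η) - 1) / (γ ^ (-η) - 1)

/-- The products in `negBinPMF` are generalised binomial coefficients. -/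
lemma prod_range_eq_choose (η : ℝ) (k : ℕ) :
    ∏ i ∈ Finset.range k, (((i : ℝ) + η) / (i + 1)) = Ring.choose (η + k - 1) k := by
  rw [← Ring.multichoose_eq]
  have h := Ring.factorial_nsmul_multichoose_eq_ascPochhammer η k
  rw [Polynomial.ascPochhammer_smeval_eq_eval, nsmul_eq_mul] at h
  have hk : (k.factorial : ℝ) ≠ 0 := by exact_mod_cast k.factorial_ne_zero
  have h2 : (∏ i ∈ Finset.range k, (((i : ℝ) + η) / (i + 1))) * k.factorial
      = (ascPochhammer ℝ k).eval η := by
    clear h hk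
    induction k with
    | zero => simp
    | succ n ih =>
      rw [ascPochhammer_succ_eval, ← ih, Finset.prod_range_succ, Nat.factorial_succ]
      push_cast
      field_simp
      ring
  apply mul_left_cancel₀ hk
  rw [h, ← h2, mul_comm]

lemma hasSum_prod_mul_pow (η x : ℝ) (hx : |x| < 1) :
    HasSum (fun k : ℕ => (∏ i ∈ Finset.range k, (((i : ℝ) + η) / (i + 1))) * x ^ k)
      ((1 - x) ^ (-η)) := by
  have h := (Real.one_div_one_sub_rpow_hasFPowerSeriesOnBall_zero η).hasSum (y := x)
    (by simpa [enorm_eq_nnnorm, ← NNReal.coe_lt_coe] using hx)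
  have h1 : 0 ≤ 1 - x := by linarith [(abs_lt.mp hx).2]
  simp only [zero_add, one_div, ← Real.rpow_neg h1] at h
  convert! h using 2 with k
  rw [prod_range_eq_choose]
  simp [mul_comm]

lemma pgf_negBinPMF {η γ z : ℝ} (hγ : γ ∈ Set.Ioo (0 : ℝ) 1) (hz : z ∈ Set.Icc (0 : ℝ) 1) :
    pgf (negBinPMF η γ) z = negBinGF η γ z := by
  obtain ⟨hγ0, hγ1⟩ := hγ
  obtain ⟨hz0, hz1⟩ := hz
  have hx : |(1 - γ) * z| < 1 := by
    rw [abs_of_nonneg (mul_nonneg (by linarith) hz0)]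
    nlinarith
  apply HasSum.tsum_eq
  by_cases hη : η = 0
  · rw [← hasSum_nat_add_iff' 1]
    have h := (hasSum_pow_div_log_of_abs_lt_one hx).div_const (Real.log (1 / γ))
    convert! h using 1
    · funext k
      simp only [negBinPMF, hη, Nat.succ_ne_zero, if_true, if_false]
      push_cast
      rw [mul_pow, div_div, div_mul_eq_mul_div]
    · simp [negBinPMF, negBinGF, hη, neg_div_neg_eq]
  · rw [← hasSum_nat_add_iff' 1]
    have h := ((hasSum_nat_add_iff' 1).mpr (hasSum_prod_mul_pow η _ hx)).div_const (γ ^ (-η) - 1)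
    convert! h using 1
    · funext k
      simp only [negBinPMF, hη, Nat.succ_ne_zero, if_false]
      rw [mul_pow]
      ring
    · simp [negBinPMF, negBinGF, hη]

lemma negBinMean_nonneg {η γ : ℝ} (hγ : γ ∈ Set.Ioo (0 : ℝ) 1) : 0 ≤ negBinMean η γ := by
  obtain ⟨hγ0, hγ1⟩ := hγ
  have h1 : 1 ≤ 1 / γ := by rw [le_div_iff₀ hγ0]; linarith
  unfold negBinMean
  split_ifs with h
  · exact div_nonneg (by linarith) (Real.log_nonneg h1)
  · rcases lt_or_gt_of_ne h with h | h
    · have := Real.one_lt_rpow_of_pos_of_lt_one_of_neg hγ0 hγ1 h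
      exact div_nonneg_of_nonpos (by nlinarith) (by nlinarith)
    · have := Real.rpow_lt_one hγ0.le hγ1 h
      exact div_nonneg (mul_nonneg h.le (by linarith)) (mul_nonneg hγ0.le (by linarith))

lemma hasDerivAt_negBinGF {η γ z : ℝ} (hγ : γ ∈ Set.Ioo (0 : ℝ) 1) (hz : z ≤ 1) :
    HasDerivAt (negBinGF η γ) (negBinMean η γ * (γ / (1 - (1 - γ) * z)) ^ (η + 1)) z := by
  obtain ⟨hγ0, hγ1⟩ := hγ
  have hψ : 0 < 1 - (1 - γ) * z := by nlinarith
  have hd : HasDerivAt (fun z : ℝ => 1 - (1 - γ) * z) (-(1 - γ)) z := by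
    simpa using ((hasDerivAt_id z).const_mul (1 - γ)).const_sub 1
  by_cases hη : η = 0
  · have h := (hd.log hψ.ne').div_const (Real.log γ)
    have hlog : Real.log γ ≠ 0 := (Real.log_neg hγ0 hγ1).ne
    have e : negBinGF η γ = fun z => Real.log (1 - (1 - γ) * z) / Real.log γ := by
      funext z; simp [negBinGF, hη]
    rw [e]
    convert! h using 1
    simp only [negBinMean, hη, if_true, zero_add, Real.rpow_one, one_div, Real.log_inv]
    field_simp
  · have h := ((hd.rpow_const (p := -η) (Or.inl hψ.ne')).sub_const 1).div_const (γ ^ (-η) - 1)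
    have e : negBinGF η γ = fun z => ((1 - (1 - γ) * z) ^ (-η) - 1) / (γ ^ (-η) - 1) := by
      funext z; simp [negBinGF, hη]
    rw [e]
    convert! h using 1
    have hg : γ ^ η ≠ 1 := by
      rcases lt_or_gt_of_ne hη with h0 | h0
      · exact (Real.one_lt_rpow_of_pos_of_lt_one_of_neg hγ0 hγ1 h0).ne'
      · exact (Real.rpow_lt_one hγ0.le hγ1 h0).ne
    have hg' : 1 - γ ^ η ≠ 0 := sub_ne_zero.mpr (Ne.symm hg)
    have hgp : γ ^ η ≠ 0 := (Real.rpow_pos_of_pos hγ0 η).ne'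
    have hpp : (1 - (1 - γ) * z) ^ (η + 1) ≠ 0 := (Real.rpow_pos_of_pos hψ _).ne'
    rw [show -η - 1 = -(η + 1) by ring, Real.rpow_neg hψ.le, Real.rpow_neg hγ0.le,
      Real.div_rpow hγ0.le hψ.le, Real.rpow_add_one hγ0.ne' η]
    simp only [negBinMean, hη, if_false]
    have hg'' : (γ ^ η)⁻¹ - 1 ≠ 0 := by
      intro h3
      apply hg'
      field_simp at h3
      linarith
    field_simp

/-! ### The Gaussian mechanism -/

/-- Chernoff bound for the hockey-stick divergence of the Gaussian mechanism: the integrand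
vanishes unless `x - 1 ≥ lσ`, where the exponential tilt of `g (x - 1)` by `l/σ` dominates it. -/
lemma gaussian_hockeyStick_le {σ l : ℝ} (hσ : 0 < σ) (hl : 0 ≤ l) (g : ℝ → ℝ)
    (hg : ∀ x, g x = (1 / (σ * Real.sqrt (2 * Real.pi))) * Real.exp (-x ^ 2 / (2 * σ ^ 2))) :
    ∫ x, max (g (x - 1) - Real.exp (1 / (2 * σ ^ 2) + (1 / σ) * l) * g x) 0
      ≤ Real.exp (-l ^ 2 / 2) := by
  set v : NNReal := ⟨σ ^ 2, sq_nonneg σ⟩ with hv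
  have hvσ : (v : ℝ) = σ ^ 2 := rfl
  have hv0 : v ≠ 0 := by
    intro h
    have : (v : ℝ) = 0 := by rw [h]; rfl
    rw [hvσ] at this
    exact hσ.ne' (pow_eq_zero_iff two_ne_zero |>.mp this)
  have hgp : ∀ x, g x = ProbabilityTheory.gaussianPDFReal 0 v x := by
    intro x
    rw [hg, ProbabilityTheory.gaussianPDFReal, hvσ, Real.sqrt_mul' _ (sq_nonneg σ),
      Real.sqrt_sq hσ.le, one_div, mul_comm σ, sub_zero]
  have hgint : MeasureTheory.Integrable g := by
    rw [funext hgp]; exact ProbabilityTheory.integrable_gaussianPDFReal 0 v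
  have hg1 : ∫ x, g x = 1 := by
    rw [funext hgp]; exact ProbabilityTheory.integral_gaussianPDFReal_eq_one 0 hv0
  have hpos : ∀ x, 0 ≤ g x := fun x => by rw [hg]; positivity
  have hc : (0 : ℝ) ≤ 1 / (σ * Real.sqrt (2 * Real.pi)) := by positivity
  calc _ ≤ ∫ x, Real.exp (-l ^ 2 / 2) * g (x - (1 + l * σ)) := by
        refine MeasureTheory.integral_mono_of_nonneg
          (Filter.Eventually.of_forall fun x => le_max_right _ _)
          ((hgint.comp_sub_right (1 + l * σ)).const_mul _)
          (Filter.Eventually.of_forall fun x => ?_)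
        have hnn := mul_nonneg (Real.exp_nonneg (-l ^ 2 / 2)) (hpos (x - (1 + l * σ)))
        refine max_le ?_ hnn
        rcases le_total (l * σ) (x - 1) with hx | hx
        · have h1 : g (x - 1) ≤ Real.exp (-l ^ 2 / 2) * g (x - (1 + l * σ)) := by
            rw [hg, hg, mul_left_comm, ← Real.exp_add]
            refine mul_le_mul_of_nonneg_left (Real.exp_le_exp.mpr ?_) hc
            have e : -l ^ 2 / 2 + -(x - (1 + l * σ)) ^ 2 / (2 * σ ^ 2) - -(x - 1) ^ 2 / (2 * σ ^ 2)
                = l / σ * (x - 1 - l * σ) := by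
              field_simp
              ring
            have : 0 ≤ l / σ * (x - 1 - l * σ) :=
              mul_nonneg (by positivity) (by linarith)
            linarith
          have := mul_nonneg (Real.exp_nonneg (1 / (2 * σ ^ 2) + (1 / σ) * l)) (hpos x)
          linarith
        · have h1 : g (x - 1) ≤ Real.exp (1 / (2 * σ ^ 2) + (1 / σ) * l) * g x := by
            rw [hg, hg, mul_left_comm, ← Real.exp_add]
            refine mul_le_mul_of_nonneg_left (Real.exp_le_exp.mpr ?_) hc
            have e : 1 / (2 * σ ^ 2) + (1 / σ) * l + -x ^ 2 / (2 * σ ^ 2)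
                - -(x - 1) ^ 2 / (2 * σ ^ 2) = (l * σ - (x - 1)) / σ ^ 2 := by
              field_simp
              ring
            have : 0 ≤ (l * σ - (x - 1)) / σ ^ 2 := div_nonneg (by linarith) (sq_nonneg σ)
            linarith
          linarith
    _ = Real.exp (-l ^ 2 / 2) := by
        rw [MeasureTheory.integral_const_mul, MeasureTheory.integral_sub_right_eq_self g, hg1,
          mul_one]

/-! ### Cumulative masses -/

lemma cumLE_eq_cumLT_add {Y : Type*} [Fintype Y] [LinearOrder Y] (Q : Y → ℝ) (y : Y) :
    cumLE Q y = cumLT Q y + Q y := by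
  unfold cumLE cumLT
  have : Finset.univ.filter (fun z => z ≤ y)
      = insert y (Finset.univ.filter (fun z => z < y)) := by
    ext z; simp [le_iff_eq_or_lt]
  rw [this, Finset.sum_insert (by simp), add_comm]

/-- If `Q'` exceeds `c * Q` by at most `τ` in hockey-stick divergence, then so it does on every
event; here the event is the complement of `p`. -/
lemma one_sub_sum_filter_le {Y : Type*} [Fintype Y] {Q Q' : Y → ℝ}
    (hQ_sum : ∑ y, Q y = 1) (hQ'_sum : ∑ y, Q' y = 1) {c τ : ℝ}
    (h : ∑ y, max (Q' y - c * Q y) 0 ≤ τ) (p : Y → Prop) [DecidablePred p] :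
    1 - ∑ z ∈ Finset.univ.filter p, Q' z ≤ c * (1 - ∑ z ∈ Finset.univ.filter p, Q z) + τ := by
  have e : ∀ R : Y → ℝ, ∑ y, R y = 1 → 1 - ∑ z ∈ Finset.univ.filter p, R z
      = ∑ z ∈ Finset.univ.filter (fun z => ¬ p z), R z := by
    intro R hR
    rw [← hR, ← Finset.sum_filter_add_sum_filter_not Finset.univ p R]; ring
  rw [e Q hQ_sum, e Q' hQ'_sum]
  have h1 : ∑ z ∈ Finset.univ.filter (fun z => ¬ p z), (Q' z - c * Q z)
      ≤ ∑ y, max (Q' y - c * Q y) 0 :=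
    (Finset.sum_le_sum fun z _ => le_max_left _ 0).trans
      (Finset.sum_le_sum_of_subset_of_nonneg (Finset.filter_subset _ _)
        fun z _ _ => le_max_right _ _)
  rw [Finset.sum_sub_distrib, ← Finset.mul_sum] at h1
  linarith

/-! ### Private selection -/

/-- The ratio of the derivatives of the generating function at `q` and `q'`, up to the factor
`m`. The additive error `γδ` is at most `δ` times `γ + (1 - γ) (1 - q)`, and
`e^a + δ ≤ e^(a + δ)` as `a ≥ 0`. -/
lemma rate_le {γ η δ a q q' : ℝ} (hγ : γ ∈ Set.Ioo (0 : ℝ) 1) (hη : -1 < η) (hδ : 0 ≤ δ)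
    (ha : 0 ≤ a) (hq : q ≤ 1) (hq' : q' ≤ 1)
    (h : 1 - q' ≤ Real.exp a * (1 - q) + γ * δ) :
    (γ / (1 - (1 - γ) * q)) ^ (η + 1)
      ≤ Real.exp ((η + 1) * (a + δ)) * (γ / (1 - (1 - γ) * q')) ^ (η + 1) := by
  obtain ⟨hγ0, hγ1⟩ := hγ
  have hψ : 0 < 1 - (1 - γ) * q := by nlinarith
  have hψ' : 0 < 1 - (1 - γ) * q' := by nlinarith
  have he : 1 ≤ Real.exp a := Real.one_le_exp ha
  have hexp : Real.exp a + δ ≤ Real.exp (a + δ) := by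
    rw [Real.exp_add]
    nlinarith [Real.add_one_le_exp δ]
  have key : 1 - (1 - γ) * q' ≤ Real.exp (a + δ) * (1 - (1 - γ) * q) := by
    have h1 : 1 - (1 - γ) * q' ≤ (Real.exp a + δ) * (1 - (1 - γ) * q) := by
      have h2 := mul_le_mul_of_nonneg_left h (sub_nonneg.mpr hγ1.le)
      have h3 : 0 ≤ γ * (Real.exp a - 1) := mul_nonneg hγ0.le (by linarith)
      have h4 : 0 ≤ δ * ((1 - γ) * (1 - q)) :=
        mul_nonneg hδ (mul_nonneg (by linarith) (by linarith))
      have h5 : 0 ≤ γ * δ * γ := by positivity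
      nlinarith
    exact h1.trans (mul_le_mul_of_nonneg_right hexp hψ.le)
  have hbase : γ / (1 - (1 - γ) * q) ≤ Real.exp (a + δ) * (γ / (1 - (1 - γ) * q')) := by
    rw [← mul_div_assoc, div_le_div_iff₀ hψ hψ']
    nlinarith
  calc _ ≤ (Real.exp (a + δ) * (γ / (1 - (1 - γ) * q'))) ^ (η + 1) :=
        Real.rpow_le_rpow (by positivity) hbase (by linarith)
    _ = _ := by
        rw [Real.mul_rpow (Real.exp_nonneg _) (by positivity), ← Real.exp_mul, mul_comm (a + δ)]

/-- Comparison of the selection probabilities of one outcome, which has base probability `p`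
preceded by mass `u` under `Q`, respectively `p'` and `u'` under `Q'`. The hypotheses `h0` and
`h1` compare the upper sets that contain and omit the outcome. -/
lemma select_sub_le {γ η δ a u p u' p' : ℝ} (hγ : γ ∈ Set.Ioo (0 : ℝ) 1) (hη : -1 < η)
    (hδ : 0 ≤ δ) (ha : 0 ≤ a) (hp : 0 ≤ p) (hp' : 0 ≤ p')
    (hup : u + p ≤ 1) (hup' : u' + p' ≤ 1)
    (h0 : 1 - u' ≤ Real.exp a * (1 - u) + γ * δ)
    (h1 : 1 - (u' + p') ≤ Real.exp a * (1 - (u + p)) + γ * δ) :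
    (negBinGF η γ (u + p) - negBinGF η γ u)
      - Real.exp ((η + 2) * a + (η + 1) * δ) * (negBinGF η γ (u' + p') - negBinGF η γ u')
      ≤ negBinMean η γ * max (p - Real.exp a * p') 0 := by
  have hm := negBinMean_nonneg (η := η) hγ
  set E := Real.exp ((η + 2) * a + (η + 1) * δ) with hE
  have hEe : E = Real.exp ((η + 1) * (a + δ)) * Real.exp a := by
    rw [hE, ← Real.exp_add]; ring_nf
  set r : ℝ → ℝ := fun q => (γ / (1 - (1 - γ) * q)) ^ (η + 1) with hr
  have hline : ∀ t ∈ Set.Icc (0 : ℝ) 1, u + t * p ≤ 1 ∧ u' + t * p' ≤ 1 := by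
    rintro t ⟨ht0, ht1⟩
    constructor <;> nlinarith
  have hder : ∀ t ∈ Set.Icc (0 : ℝ) 1,
      HasDerivAt (fun t => negBinGF η γ (u + t * p) - E * negBinGF η γ (u' + t * p'))
        (negBinMean η γ * r (u + t * p) * p - E * (negBinMean η γ * r (u' + t * p') * p')) t := by
    intro t ht
    have haff : ∀ b c : ℝ, HasDerivAt (fun t : ℝ => b + t * c) c t := fun b c => by
      simpa using ((hasDerivAt_id t).mul_const c).const_add b
    have d1 := (hasDerivAt_negBinGF (η := η) hγ (hline t ht).1).comp t (haff u p)
    have d2 := (hasDerivAt_negBinGF (η := η) hγ (hline t ht).2).comp t (haff u' p')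
    exact d1.sub (d2.const_mul E)
  have hbound : ∀ t ∈ Set.Icc (0 : ℝ) 1,
      negBinMean η γ * r (u + t * p) * p - E * (negBinMean η γ * r (u' + t * p') * p')
        ≤ negBinMean η γ * max (p - Real.exp a * p') 0 := by
    intro t ht
    obtain ⟨hq, hq'⟩ := hline t ht
    have htail : 1 - (u' + t * p') ≤ Real.exp a * (1 - (u + t * p)) + γ * δ := by
      have e0 := mul_le_mul_of_nonneg_left h0 (sub_nonneg.mpr ht.2)
      have e1 := mul_le_mul_of_nonneg_left h1 ht.1
      nlinarith
    have hrate : r (u + t * p) ≤ Real.exp ((η + 1) * (a + δ)) * r (u' + t * p') :=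
      rate_le hγ hη hδ ha hq hq' htail
    have hψ : γ ≤ 1 - (1 - γ) * (u + t * p) := by nlinarith [hγ.1, hγ.2]
    have hr0 : 0 ≤ r (u + t * p) :=
      Real.rpow_nonneg (div_nonneg hγ.1.le (hγ.1.le.trans hψ)) _
    have hr1 : r (u + t * p) ≤ 1 :=
      Real.rpow_le_one (div_nonneg hγ.1.le (hγ.1.le.trans hψ))
        ((div_le_one (hγ.1.trans_le hψ)).mpr hψ) (by linarith)
    have hmid : r (u + t * p) * p - E * (r (u' + t * p') * p')
        ≤ r (u + t * p) * (p - Real.exp a * p') := by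
      rw [hEe]
      have := mul_le_mul_of_nonneg_right hrate (mul_nonneg (Real.exp_nonneg a) hp')
      nlinarith
    have hlast : r (u + t * p) * (p - Real.exp a * p') ≤ max (p - Real.exp a * p') 0 :=
      (mul_le_mul_of_nonneg_left (le_max_left _ 0) hr0).trans
        (mul_le_of_le_one_left (le_max_right _ _) hr1)
    have := mul_le_mul_of_nonneg_left (hmid.trans hlast) hm
    linarith
  have hmv := (convex_Icc (0 : ℝ) 1).image_sub_le_mul_sub_of_deriv_le
    (fun t ht => (hder t ht).continuousAt.continuousWithinAt)
    (fun t ht => (hder t (interior_subset ht)).differentiableAt.differentiableWithinAt)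
    (fun t ht => by
      rw [(hder t (interior_subset ht)).deriv]
      exact hbound t (interior_subset ht))
    0 (by simp) 1 (by simp) zero_le_one
  simp only [one_mul, zero_mul, add_zero, sub_zero, mul_one] at hmv
  linarith

open MeasureTheory in
/-- Corollary 5.5: ε-values for private selection with a truncated negative binomial
number of candidates when the base mechanism is Gaussian differentially private. -/
theorem private_selection_negbin_gdp
    {Y : Type*} [Fintype Y] [LinearOrder Y]
    (Q Q' : Y → ℝ)
    (hQ_pos : ∀ y, 0 < Q y) (hQ_le : ∀ y, Q y ≤ 1) (hQ_sum : ∑ y, Q y = 1)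
    (hQ'_pos : ∀ y, 0 < Q' y) (hQ'_le : ∀ y, Q' y ≤ 1) (hQ'_sum : ∑ y, Q' y = 1)
    (γ η : ℝ) (hγ : γ ∈ Set.Ioo (0 : ℝ) 1) (hη : -1 < η)
    (m : ℝ) (hm : m = negBinMean η γ) (hmγ : m * γ ≤ 1)
    (A A' : Y → ℝ)
    (hA : ∀ y, A y = pgf (negBinPMF η γ) (cumLE Q y) - pgf (negBinPMF η γ) (cumLT Q y))
    (hA' : ∀ y, A' y = pgf (negBinPMF η γ) (cumLE Q' y) - pgf (negBinPMF η γ) (cumLT Q' y))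
    (σ : ℝ) (hσ : 0 < σ)
    (g : ℝ → ℝ)
    (hg : ∀ x, g x = (1 / (σ * Real.sqrt (2 * Real.pi))) * Real.exp (-x ^ 2 / (2 * σ ^ 2)))
    (hdom : ∀ s : ℝ, ∑ y, max (Q y - Real.exp s * Q' y) 0
        ≤ ∫ x, max (g (x - 1) - Real.exp s * g x) 0)
    (hdom' : ∀ s : ℝ, ∑ y, max (Q' y - Real.exp s * Q y) 0
        ≤ ∫ x, max (g (x - 1) - Real.exp s * g x) 0)
    (δ : ℝ) (hδ_pos : 0 < δ) (hδ_le : δ ≤ 1)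
    (ε : ℝ)
    (hε : ε = (η + 2) * (1 / (2 * σ ^ 2) + (1 / σ) * Real.sqrt (2 * Real.log (1 / (γ * δ))))
        + (η + 1) * δ) :
    ∑ y, max (A y - Real.exp ε * A' y) 0 ≤ δ := by
  set l := Real.sqrt (2 * Real.log (1 / (γ * δ))) with hl
  set a := 1 / (2 * σ ^ 2) + (1 / σ) * l with ha
  have ha0 : 0 ≤ a := by positivity
  have hγδ : 0 < γ * δ := mul_pos hγ.1 hδ_pos
  have hlog : 0 ≤ Real.log (1 / (γ * δ)) := by
    apply Real.log_nonneg
    rw [le_div_iff₀ hγδ]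
    nlinarith [hγ.1, hγ.2]
  -- `l` is chosen so that the Gaussian tail bound `exp (-l² / 2)` equals `γ * δ`.
  have htail : ∫ x, max (g (x - 1) - Real.exp a * g x) 0 ≤ γ * δ := by
    refine (gaussian_hockeyStick_le hσ (Real.sqrt_nonneg _) g hg).trans_eq ?_
    rw [← hl, hl, Real.sq_sqrt (by linarith), one_div, Real.log_inv,
      show -(2 * -Real.log (γ * δ)) / 2 = Real.log (γ * δ) by ring, Real.exp_log hγδ]
  have hfwd := (hdom a).trans htail
  have hbwd := (hdom' a).trans htail
  have hLT : ∀ R : Y → ℝ, (∀ y, 0 < R y) → ∀ y, 0 ≤ cumLT R y :=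
    fun R hR y => Finset.sum_nonneg fun z _ => (hR z).le
  have hLE : ∀ R : Y → ℝ, (∀ y, 0 < R y) → ∑ y, R y = 1 → ∀ y, cumLE R y ≤ 1 := by
    intro R hR hR1 y
    rw [← hR1]
    exact Finset.sum_le_sum_of_subset_of_nonneg (Finset.filter_subset _ _) fun z _ _ => (hR z).le
  have hpgf : ∀ R : Y → ℝ, (∀ y, 0 < R y) → ∑ y, R y = 1 → ∀ y,
      pgf (negBinPMF η γ) (cumLE R y) - pgf (negBinPMF η γ) (cumLT R y)
        = negBinGF η γ (cumLT R y + R y) - negBinGF η γ (cumLT R y) := by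
    intro R hR hR1 y
    have h1 := hLE R hR hR1 y
    have h2 := hLT R hR y
    have h3 := cumLE_eq_cumLT_add R y
    have h4 := hR y
    rw [pgf_negBinPMF hγ ⟨by linarith, h1⟩, pgf_negBinPMF hγ ⟨h2, by linarith⟩, h3]
  have hm0 : 0 ≤ m := hm ▸ negBinMean_nonneg hγ
  have hpt : ∀ y, max (A y - Real.exp ε * A' y) 0 ≤ m * max (Q y - Real.exp a * Q' y) 0 := by
    intro y
    refine max_le ?_ (mul_nonneg hm0 (le_max_right _ _))
    rw [hA, hA', hpgf Q hQ_pos hQ_sum, hpgf Q' hQ'_pos hQ'_sum, hε, hm]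
    refine select_sub_le hγ hη hδ_pos.le ha0 (hQ_pos y).le (hQ'_pos y).le ?_ ?_ ?_ ?_
    · rw [← cumLE_eq_cumLT_add]; exact hLE Q hQ_pos hQ_sum y
    · rw [← cumLE_eq_cumLT_add]; exact hLE Q' hQ'_pos hQ'_sum y
    · exact one_sub_sum_filter_le hQ_sum hQ'_sum hbwd _
    · rw [← cumLE_eq_cumLT_add, ← cumLE_eq_cumLT_add]
      exact one_sub_sum_filter_le hQ_sum hQ'_sum hbwd _
  calc ∑ y, max (A y - Real.exp ε * A' y) 0
      ≤ ∑ y, m * max (Q y - Real.exp a * Q' y) 0 := Finset.sum_le_sum fun y _ => hpt y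
    _ = m * ∑ y, max (Q y - Real.exp a * Q' y) 0 := by rw [Finset.mul_sum]
    _ ≤ m * (γ * δ) := mul_le_mul_of_nonneg_left hfwd hm0
    _ = m * γ * δ := by ring
    _ ≤ 1 * δ := mul_le_mul_of_nonneg_right hmγ hδ_pos.le
    _ = δ := one_mul δ
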